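/- Let k be an algebraically closed field of characteristic 0, let J be an invertible 4×4 matrix over k with Jᵀ = −J, let d ∈ kˣ, and let A be a 4×4 matrix over k with Aᵀ·J·A = d·J. If −d is an eigenvalue of the induced endomorphism ⋀²A of the exterior square ⋀²(k⁴), then trace(A) = 0. -/

import Mathlib

/-!
Statement 13: Let `k` be an algebraically closed field of characteristic 0, `J` an invertible
`4×4` matrix over `k` with `Jᵀ = −J`, `d ∈ kˣ`, and `A` a `4×4` matrix with `Aᵀ·J·A = d·J`.
If `−d` is an eigenvalue of the induced endomorphism `⋀²A` of the exterior square `⋀²(k⁴)`,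
then `trace A = 0`.
-/

open Matrix Module

section ExtSq
variable {k : Type} [Field k]
variable {V W : Type} [AddCommGroup V] [Module k V] [AddCommGroup W] [Module k W]

lemma map_mem_exteriorPower (f : V →ₗ[k] W) (n : ℕ) {x : ExteriorAlgebra k V}
    (hx : x ∈ ⋀[k]^n V) : ExteriorAlgebra.map f x ∈ ⋀[k]^n W := by
  rw [← ExteriorAlgebra.ιMulti_span_fixedDegree] at hx ⊢
  induction hx using Submodule.span_induction with
  | mem y hy =>
      obtain ⟨m, rfl⟩ := hy
      rw [ExteriorAlgebra.map_apply_ιMulti]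
      exact Submodule.subset_span ⟨f ∘ m, rfl⟩
  | zero => simp
  | add y z _ _ h1 h2 => rw [map_add]; exact Submodule.add_mem _ h1 h2
  | smul c y _ h => rw [_root_.map_smul]; exact Submodule.smul_mem _ c h

/-- The exterior square of a linear map, as a map between second exterior powers. -/
noncomputable def extSq (f : V →ₗ[k] W) : (⋀[k]^2 V) →ₗ[k] (⋀[k]^2 W) :=
  LinearMap.restrict (ExteriorAlgebra.map f).toLinearMap
    (fun _ hx => map_mem_exteriorPower f 2 hx)

end ExtSq

/-!
The wedge `u ∧ v ↦ u vᵀ - v uᵀ` turns an eigenvector of `⋀²A` for `-d` into a nonzero alternating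
matrix `S` with `A S Aᵀ = -d S`, and since `Aᵀ J A = d J`, the matrix `M = S J` anticommutes with
`A`. If `M` is invertible, conjugation by `M` gives `trace A = -trace A`. To include the case where
`S` is singular, one uses the Hodge dual `S ↦ ⋆S`: polarizing `S ⋆S = -Pf(S)` gives
`2 (S T + ⋆T ⋆S) = trace (S T)`, which translates into an anticommutator relation between `M` and
`N = ⋆J T`. As `trace M = 0`, this relation reads `2 (M N + N M) = trace N • M + trace (M N)`;
multiplying by `A` and taking traces leaves `trace (M N) * trace A = 0`, and `trace (M N)`, which is
`-Pf(J) trace (S T)`, is nonzero for a suitable alternating `T`.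
-/

section AlternatingMatrix

variable {n R : Type*} [CommRing R]

/-- A square matrix is alternating if it is the matrix of an alternating bilinear form: it is
skew-symmetric with zero diagonal. The second condition follows from the first unless `2` is a
zero divisor. -/
structure IsAlternating (S : Matrix n n R) : Prop where
  transpose_eq_neg : Sᵀ = -S
  diag_eq_zero : S.diag = 0

namespace IsAlternating

lemma apply_swap {S : Matrix n n R} (hS : IsAlternating S) (i j : n) : S j i = -S i j :=
  congrFun₂ hS.transpose_eq_neg i j

lemma apply_self {S : Matrix n n R} (hS : IsAlternating S) (i : n) : S i i = 0 :=
  congrFun hS.diag_eq_zero i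

lemma of_transpose_eq_neg [NoZeroDivisors R] [NeZero (2 : R)] {S : Matrix n n R}
    (hS : Sᵀ = -S) : IsAlternating S where
  transpose_eq_neg := hS
  diag_eq_zero := by
    ext i
    have h : S i i = -S i i := congrFun₂ hS i i
    have h2 : 2 * S i i = 0 := by linear_combination h
    exact (mul_eq_zero.mp h2).resolve_left two_ne_zero

lemma add {S T : Matrix n n R} (hS : IsAlternating S) (hT : IsAlternating T) :
    IsAlternating (S + T) where
  transpose_eq_neg := by
    rw [Matrix.transpose_add, hS.transpose_eq_neg, hT.transpose_eq_neg, neg_add]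
  diag_eq_zero := by rw [Matrix.diag_add, hS.diag_eq_zero, hT.diag_eq_zero, add_zero]

lemma single_sub_single [DecidableEq n] (i j : n) :
    IsAlternating (Matrix.single i j (1 : R) - Matrix.single j i 1) where
  transpose_eq_neg := by simp
  diag_eq_zero := by
    ext a
    simp [Matrix.single_apply, and_comm]

lemma exists_trace_mul_ne_zero [Fintype n] [NoZeroDivisors R] [NeZero (2 : R)]
    {S : Matrix n n R} (hS : IsAlternating S) (hS0 : S ≠ 0) :
    ∃ T : Matrix n n R, IsAlternating T ∧ (S * T).trace ≠ 0 := by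
  classical
  obtain ⟨i, j, hij⟩ : ∃ i j, S i j ≠ 0 := by
    by_contra! h
    exact hS0 (Matrix.ext h)
  refine ⟨_, single_sub_single j i, ?_⟩
  have htrace : (S * (Matrix.single j i 1 - Matrix.single i j 1)).trace = 2 * S i j := by
    simp only [mul_sub, Matrix.trace_sub, Matrix.trace_mul_single, hS.apply_swap i j,
      MulOpposite.op_one, one_smul]
    ring
  rw [htrace]
  exact mul_ne_zero two_ne_zero hij

end IsAlternating

end AlternatingMatrix

section FourByFour

variable {R : Type*} [CommRing R]

/-- The Pfaffian of an alternating `4 × 4` matrix, read off from the entries above the diagonal. -/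
def pfaffianFour (S : Matrix (Fin 4) (Fin 4) R) : R :=
  S 0 1 * S 2 3 - S 0 2 * S 1 3 + S 0 3 * S 1 2

/-- The Hodge dual of an alternating `4 × 4` matrix, read off from the entries above the diagonal:
it comes from the identification of a four-dimensional `⋀²V` with `⋀²V*` given by the standard
volume form, and plays the role of an adjugate with the Pfaffian in place of the determinant. -/
def hodgeDual (S : Matrix (Fin 4) (Fin 4) R) : Matrix (Fin 4) (Fin 4) R :=
  !![0, S 2 3, -S 1 3, S 1 2;
    -S 2 3, 0, S 0 3, -S 0 2;
    S 1 3, -S 0 3, 0, S 0 1;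
    -S 1 2, S 0 2, -S 0 1, 0]

lemma hodgeDual_add (S T : Matrix (Fin 4) (Fin 4) R) :
    hodgeDual (S + T) = hodgeDual S + hodgeDual T := by
  ext i j
  fin_cases i <;> fin_cases j <;> simp [hodgeDual] <;> ring

namespace IsAlternating

lemma eq_of_fin_four {S : Matrix (Fin 4) (Fin 4) R} (hS : IsAlternating S) :
    S = !![0, S 0 1, S 0 2, S 0 3;
      -S 0 1, 0, S 1 2, S 1 3;
      -S 0 2, -S 1 2, 0, S 2 3;
      -S 0 3, -S 1 3, -S 2 3, 0] := by
  ext i j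
  fin_cases i <;> fin_cases j <;> first | exact hS.apply_self _ | exact hS.apply_swap _ _ | rfl

lemma det_fin_four {S : Matrix (Fin 4) (Fin 4) R} (hS : IsAlternating S) :
    S.det = pfaffianFour S ^ 2 := by
  rw [hS.eq_of_fin_four]
  simp [pfaffianFour, Matrix.det_succ_row_zero, Fin.sum_univ_succ, Fin.succAbove]
  ring

lemma hodgeDual_hodgeDual {S : Matrix (Fin 4) (Fin 4) R} (hS : IsAlternating S) :
    hodgeDual (hodgeDual S) = S := by
  rw [hS.eq_of_fin_four]
  simp [hodgeDual]

lemma mul_hodgeDual {S : Matrix (Fin 4) (Fin 4) R} (hS : IsAlternating S) :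
    S * hodgeDual S = -pfaffianFour S • 1 := by
  rw [hS.eq_of_fin_four]
  ext i j
  fin_cases i <;> fin_cases j <;>
    simp [pfaffianFour, hodgeDual, Matrix.mul_apply, Fin.sum_univ_four] <;> ring

lemma mul_mul_hodgeDual_mul {J : Matrix (Fin 4) (Fin 4) R} (hJ : IsAlternating J)
    (S T : Matrix (Fin 4) (Fin 4) R) :
    S * J * (hodgeDual J * T) = -pfaffianFour J • (S * T) := by
  calc S * J * (hodgeDual J * T) = S * (J * hodgeDual J) * T := by simp only [mul_assoc]
    _ = -pfaffianFour J • (S * T) := by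
        rw [hJ.mul_hodgeDual, Matrix.mul_smul, mul_one, Matrix.smul_mul]

end IsAlternating

lemma isAlternating_hodgeDual (S : Matrix (Fin 4) (Fin 4) R) : IsAlternating (hodgeDual S) where
  transpose_eq_neg := by
    ext i j
    fin_cases i <;> fin_cases j <;> simp [hodgeDual]
  diag_eq_zero := by
    ext i
    fin_cases i <;> rfl

namespace IsAlternating

-- The polarization of `mul_hodgeDual`, in the directions `S` and `hodgeDual T`.
lemma mul_add_hodgeDual_mul_hodgeDual {S T : Matrix (Fin 4) (Fin 4) R}
    (hS : IsAlternating S) (hT : IsAlternating T) :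
    S * T + hodgeDual T * hodgeDual S =
      -QuadraticMap.polar pfaffianFour S (hodgeDual T) • 1 := by
  have hadd := (hS.add (isAlternating_hodgeDual T)).mul_hodgeDual
  rw [hodgeDual_add, hT.hodgeDual_hodgeDual, add_mul, mul_add, mul_add, hS.mul_hodgeDual] at hadd
  have hdual := (isAlternating_hodgeDual T).mul_hodgeDual
  rw [hT.hodgeDual_hodgeDual] at hdual
  rw [hdual] at hadd
  simp only [QuadraticMap.polar]
  linear_combination (norm := module) hadd

lemma trace_mul_eq_polar {S T : Matrix (Fin 4) (Fin 4) R}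
    (hS : IsAlternating S) (hT : IsAlternating T) :
    (S * T).trace = -2 * QuadraticMap.polar pfaffianFour S (hodgeDual T) := by
  rw [hS.eq_of_fin_four, hT.eq_of_fin_four]
  simp [hodgeDual, pfaffianFour, QuadraticMap.polar, Matrix.trace, Fin.sum_univ_four]
  ring

lemma two_smul_mul_add_hodgeDual_mul_hodgeDual {S T : Matrix (Fin 4) (Fin 4) R}
    (hS : IsAlternating S) (hT : IsAlternating T) :
    (2 : R) • (S * T + hodgeDual T * hodgeDual S) = (S * T).trace • 1 := by
  rw [hS.mul_add_hodgeDual_mul_hodgeDual hT, hS.trace_mul_eq_polar hT, smul_smul, mul_neg, neg_mul]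

end IsAlternating

lemma IsAlternating.four_smul_mul_add_mul {S J T : Matrix (Fin 4) (Fin 4) R}
    (hS : IsAlternating S) (hJ : IsAlternating J) (hT : IsAlternating T) :
    let M := S * J
    let N := hodgeDual J * T
    (4 : R) • (M * N + N * M) = (2 * N.trace) • M + (2 * M.trace) • N +
      (2 * (M * N).trace - M.trace * N.trace) • 1 := by
  intro M N
  set p := pfaffianFour J
  have hMN : M * N = -p • (S * T) := hJ.mul_mul_hodgeDual_mul S T
  have hdualS : (2 : R) • (J * M) = (2 * p) • hodgeDual S + M.trace • J := by
    have h := congrArg (J * ·) (hS.two_smul_mul_add_hodgeDual_mul_hodgeDual hJ)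
    simp only [mul_add, Matrix.mul_smul, mul_one, ← mul_assoc, hJ.mul_hodgeDual,
      Matrix.smul_mul, one_mul] at h
    simp only [M, ← mul_assoc]
    linear_combination (norm := module) h
  have hdualT : (2 : R) • (hodgeDual T * J) = N.trace • 1 - (2 : R) • N := by
    have h := (isAlternating_hodgeDual J).two_smul_mul_add_hodgeDual_mul_hodgeDual hT
    rw [hJ.hodgeDual_hodgeDual] at h
    linear_combination (norm := module) h
  have hdualTS : (4 * p) • (hodgeDual T * hodgeDual S) =
      (2 * N.trace) • M + (2 * M.trace) • N - (4 : R) • (N * M) - (M.trace * N.trace) • 1 := by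
    have h := congrArg (hodgeDual T * ·) hdualS
    have h' := congrArg (· * M) hdualT
    simp only [mul_add, sub_mul, Matrix.mul_smul, Matrix.smul_mul, one_mul, ← mul_assoc] at h h'
    linear_combination (norm := module) (-2 : R) • h + (2 : R) • h' - M.trace • hdualT
  have hST := hS.two_smul_mul_add_hodgeDual_mul_hodgeDual hT
  rw [hMN, Matrix.trace_smul, smul_eq_mul]
  linear_combination (norm := module) (-2 * p) • hST + hdualTS

end FourByFour

section Anticommute

variable {n R : Type*} [Fintype n] [CommRing R]

lemma trace_mul_anticommutator_eq_zero {A M : Matrix n n R} (N : Matrix n n R)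
    (h : A * M = -(M * A)) : (A * (M * N + N * M)).trace = 0 := by
  rw [mul_add, Matrix.trace_add, ← mul_assoc, h, ← mul_assoc A N M,
    Matrix.trace_mul_comm (A * N) M, neg_mul, Matrix.trace_neg, mul_assoc, neg_add_cancel]

variable [NoZeroDivisors R] [NeZero (2 : R)]

lemma trace_mul_eq_zero_of_anticommute {A M : Matrix n n R} (h : A * M = -(M * A)) :
    (A * M).trace = 0 := by
  have htrace : (A * M).trace = -(A * M).trace := by
    conv_lhs => rw [h, Matrix.trace_neg, Matrix.trace_mul_comm]
  have h2 : 2 * (A * M).trace = 0 := by linear_combination htrace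
  exact (mul_eq_zero.mp h2).resolve_left two_ne_zero

lemma trace_eq_zero_of_anticommute [DecidableEq n] {A M : Matrix n n R} (hA : IsUnit A)
    (h : A * M = -(M * A)) : M.trace = 0 := by
  obtain ⟨B, hAB, hBA⟩ := isUnit_iff_exists.mp hA
  have hanti : A * (B * M) = -(B * M * A) := by
    calc A * (B * M) = B * (A * M) := by rw [← mul_assoc, ← mul_assoc, hAB, hBA]
      _ = -(B * M * A) := by rw [h, mul_neg, mul_assoc]
  simpa only [← mul_assoc, hAB, one_mul] using trace_mul_eq_zero_of_anticommute hanti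

end Anticommute

section Similitude

variable {n R : Type*} [Fintype n] [CommRing R]

lemma anticommute_of_similitude [NoZeroDivisors R] {A J S : Matrix n n R} {d : R} (hd : d ≠ 0)
    (hJ : Aᵀ * J * A = d • J) (hS : A * S * Aᵀ = -d • S) : A * (S * J) = -(S * J * A) := by
  refine smul_right_injective _ hd ?_
  calc d • (A * (S * J)) = A * S * (Aᵀ * J * A) := by
        rw [hJ, Matrix.mul_smul, mul_assoc]
    _ = A * S * Aᵀ * (J * A) := by simp only [mul_assoc]
    _ = d • -(S * J * A) := by
        rw [hS, neg_smul, neg_mul, Matrix.smul_mul, smul_neg, mul_assoc]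

lemma isUnit_of_similitude [DecidableEq n] {A J : Matrix n n R} {d : R} (hd : IsUnit d)
    (hJ : IsUnit J) (hA : Aᵀ * J * A = d • J) : IsUnit A :=
  isUnit_of_mul_isUnit_right (hA ▸ hJ.smul hd.unit)

end Similitude

section TraceZero

variable {R : Type*} [CommRing R] [NoZeroDivisors R] [NeZero (2 : R)]

lemma trace_eq_zero_of_anticommute_mul_of_isAlternating {A J S : Matrix (Fin 4) (Fin 4) R}
    (hA : IsUnit A) (hJ : IsAlternating J) (hJdet : J.det ≠ 0) (hS : IsAlternating S)
    (hS0 : S ≠ 0) (hAM : A * (S * J) = -(S * J * A)) : A.trace = 0 := by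
  obtain ⟨T, hT, hST⟩ := hS.exists_trace_mul_ne_zero hS0
  have hanticomm := hS.four_smul_mul_add_mul hJ hT
  have hMN : S * J * (hodgeDual J * T) = -pfaffianFour J • (S * T) :=
    hJ.mul_mul_hodgeDual_mul S T
  have htrM : (S * J).trace = 0 := trace_eq_zero_of_anticommute hA hAM
  have htrAM : (A * (S * J)).trace = 0 := trace_mul_eq_zero_of_anticommute hAM
  have htrAMN := trace_mul_anticommutator_eq_zero (hodgeDual J * T) hAM
  have htrMN : (S * J * (hodgeDual J * T)).trace ≠ 0 := by
    have hpf : pfaffianFour J ≠ 0 :=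
      (pow_ne_zero_iff two_ne_zero).mp (hJ.det_fin_four ▸ hJdet)
    rw [hMN, Matrix.trace_smul]
    exact mul_ne_zero (neg_ne_zero.mpr hpf) hST
  generalize S * J = M at *
  generalize hodgeDual J * T = N at *
  have htrace : 2 * (M * N).trace * A.trace = 0 := by
    have h := congrArg (fun X => (A * X).trace) hanticomm
    simp only [htrM, mul_add A (_ • _), Matrix.mul_smul, Matrix.trace_add, Matrix.trace_smul,
      htrAM, htrAMN, mul_one, mul_zero, zero_mul, zero_smul, add_zero, zero_add, sub_zero,
      smul_eq_mul] at h
    exact h.symm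
  exact (mul_eq_zero.mp htrace).resolve_left (mul_ne_zero two_ne_zero htrMN)

end TraceZero

section ExteriorSquare

variable {ι R : Type*} [CommRing R]

/-- The matrix of a bivector: the linear map `⋀²(Rⁿ) → Mₙ(R)` sending `u ∧ v` to `u vᵀ - v uᵀ`.
Its `(i, j)` entry is the pairing with the exterior product of the `i`-th and `j`-th coordinate
forms. -/
noncomputable def bivectorMatrix : ⋀[R]^2 (ι → R) →ₗ[R] Matrix ι ι R where
  toFun x := Matrix.of fun i j =>
    exteriorPower.pairingDual R (ι → R) 2
      (exteriorPower.ιMulti R 2 ![LinearMap.proj i, LinearMap.proj j]) x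
  map_add' x y := by
    ext i j
    simp only [map_add, Matrix.of_apply, Matrix.add_apply]
  map_smul' c x := by
    ext i j
    simp only [_root_.map_smul, Matrix.of_apply, Matrix.smul_apply, RingHom.id_apply]

lemma bivectorMatrix_apply (x : ⋀[R]^2 (ι → R)) (i j : ι) :
    bivectorMatrix x i j = exteriorPower.pairingDual R (ι → R) 2
      (exteriorPower.ιMulti R 2 ![LinearMap.proj i, LinearMap.proj j]) x :=
  rfl

lemma bivectorMatrix_ιMulti (w : Fin 2 → ι → R) :
    bivectorMatrix (exteriorPower.ιMulti R 2 w) =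
      Matrix.vecMulVec (w 0) (w 1) - Matrix.vecMulVec (w 1) (w 0) := by
  ext i j
  simp [bivectorMatrix_apply, Matrix.det_fin_two, Matrix.vecMulVec_apply, mul_comm]

lemma isAlternating_bivectorMatrix (x : ⋀[R]^2 (ι → R)) : IsAlternating (bivectorMatrix x) where
  transpose_eq_neg := by
    have h : (Matrix.transposeLinearEquiv ι ι R R).toLinearMap ∘ₗ bivectorMatrix =
        -bivectorMatrix (ι := ι) (R := R) := by
      refine exteriorPower.linearMap_ext (AlternatingMap.ext fun w => ?_)
      simp [bivectorMatrix_ιMulti, Matrix.transpose_vecMulVec]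
    exact LinearMap.congr_fun h x
  diag_eq_zero := by
    ext i
    rw [Matrix.diag_apply, bivectorMatrix_apply,
      (exteriorPower.ιMulti R 2).map_eq_zero_of_eq (i := 0) (j := 1) _ rfl zero_ne_one, map_zero]
    rfl

lemma bivectorMatrix_map [Fintype ι] [DecidableEq ι] (A : Matrix ι ι R) (x : ⋀[R]^2 (ι → R)) :
    bivectorMatrix (exteriorPower.map 2 (Matrix.toLin' A) x) = A * bivectorMatrix x * Aᵀ := by
  have h : bivectorMatrix ∘ₗ exteriorPower.map 2 (Matrix.toLin' A) =
      (LinearMap.mulRight R Aᵀ ∘ₗ LinearMap.mulLeft R A) ∘ₗ bivectorMatrix := by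
    refine exteriorPower.linearMap_ext (AlternatingMap.ext fun w => ?_)
    simp [bivectorMatrix_ιMulti, mul_sub, sub_mul, Matrix.mul_vecMulVec,
      Matrix.vecMulVec_mul, Matrix.vecMul_transpose]
  exact LinearMap.congr_fun h x

lemma bivectorMatrix_injective [Finite ι] [LinearOrder ι] :
    Function.Injective (bivectorMatrix (ι := ι) (R := R)) := by
  refine (injective_iff_map_eq_zero _).mpr fun x hx => ?_
  refine ((Pi.basisFun R ι).exteriorPower 2).ext_elem fun s => ?_
  set e := Set.powersetCard.ofFinEmbEquiv.symm s
  have hcoord : (Pi.basisFun R ι).coord ∘ e = ![LinearMap.proj (e 0), LinearMap.proj (e 1)] := by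
    funext i
    fin_cases i <;> ext <;> simp
  rw [exteriorPower.basis_repr_apply, map_zero, exteriorPower.ιMultiDual,
    exteriorPower.ιMulti_family, hcoord, ← bivectorMatrix_apply, hx]
  rfl

lemma extSq_eq_map {k V W : Type} [Field k] [AddCommGroup V] [Module k V] [AddCommGroup W]
    [Module k W] (f : V →ₗ[k] W) : extSq f = exteriorPower.map 2 f := by
  refine exteriorPower.linearMap_ext (AlternatingMap.ext fun w => ?_)
  simp only [LinearMap.compAlternatingMap_apply, exteriorPower.map_apply_ιMulti]
  exact Subtype.ext (ExteriorAlgebra.map_apply_ιMulti f w)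

end ExteriorSquare

theorem stmt_13_general {k : Type} [Field k] [NeZero (2 : k)]
    (J A : Matrix (Fin 4) (Fin 4) k)
    (hJ : IsUnit J.det) (hJskew : Jᵀ = -J)
    (d : k) (hd : d ≠ 0)
    (hA : Aᵀ * J * A = d • J)
    (heig : Module.End.HasEigenvalue
      (extSq (Matrix.toLin' A) : Module.End k (⋀[k]^2 (Fin 4 → k))) (-d)) :
    A.trace = 0 := by
  obtain ⟨x, hx⟩ := heig.exists_hasEigenvector
  have hS0 : bivectorMatrix x ≠ 0 := (map_ne_zero_iff _ bivectorMatrix_injective).mpr hx.2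
  have hSA : A * bivectorMatrix x * Aᵀ = -d • bivectorMatrix x := by
    rw [← bivectorMatrix_map, ← extSq_eq_map, hx.apply_eq_smul, _root_.map_smul]
  have hAunit : IsUnit A :=
    isUnit_of_similitude hd.isUnit ((Matrix.isUnit_iff_isUnit_det J).mpr hJ) hA
  exact trace_eq_zero_of_anticommute_mul_of_isAlternating hAunit (.of_transpose_eq_neg hJskew)
    hJ.ne_zero (isAlternating_bivectorMatrix x) hS0 (anticommute_of_similitude hd hA hSA)

theorem stmt_13 {k : Type} [Field k] [IsAlgClosed k] [CharZero k]
    (J A : Matrix (Fin 4) (Fin 4) k)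
    (hJ : IsUnit J.det) (hJskew : Jᵀ = -J)
    (d : k) (hd : d ≠ 0)
    (hA : Aᵀ * J * A = d • J)
    -- `−d` is an eigenvalue of the induced endomorphism `⋀²A` of `⋀²(k⁴)`
    (heig : Module.End.HasEigenvalue
      (extSq (Matrix.toLin' A) : Module.End k (⋀[k]^2 (Fin 4 → k))) (-d)) :
    A.trace = 0 :=
  stmt_13_general J A hJ hJskew d hd hA heig
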